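/- arXiv:2302.02773 — 6 statements merged into one kernel-verified Lean document; each statement's English description precedes it below -/
import Mathlib

section
/- In the split real line ℝₛ with the order topology, for any sequence (xₙ) in ℝₛ and any t ∈ ℝ: (xₙ) converges to t+ if and only if the first coordinates of xₙ converge to t in ℝ and xₙ ≥ t+ for all sufficiently large n; and (xₙ) converges to t− if and only if the first coordinates of xₙ converge to t in ℝ and xₙ ≤ t− for all sufficiently large n. -/
/-!
The split real line ℝₛ is `Lex (ℝ × Bool)` (with `false` playing the role of `−`
and `true` the role of `+`), equipped with the lexicographic order and the
order topology.
-/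

/-!
The point `t+` is the immediate successor of `t−`, so `{y | t− < y} = [t+, ∞)` is a neighbourhood
of `t+`; this forces `xₙ ≥ t+` eventually. The first coordinate is continuous because
`a < y.1 ↔ a+ < y` and `y.1 < b ↔ y < b−`. Conversely, every `b > t+` has first coordinate larger
than `t`, so convergence of the first coordinates controls the upper side of `t+`, and `xₙ ≥ t+`
controls the lower side. The case of `t−` is symmetric.
-/

open Filter Topology

noncomputable instance : TopologicalSpace (ℝ ×ₗ Bool) := Preorder.topology _
instance : OrderTopology (ℝ ×ₗ Bool) := ⟨rfl⟩

theorem toLex_true_lt_iff (a : ℝ) (y : ℝ ×ₗ Bool) :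
    toLex (a, true) < y ↔ a < (ofLex y).1 := by
  simp [Prod.Lex.lt_iff]

theorem lt_toLex_false_iff (b : ℝ) (y : ℝ ×ₗ Bool) :
    y < toLex (b, false) ↔ (ofLex y).1 < b := by
  simp [Prod.Lex.lt_iff]

/-- `t+` is the immediate successor of `t−`. -/
theorem toLex_false_covBy_true (t : ℝ) :
    (toLex (t, false) : ℝ ×ₗ Bool) ⋖ toLex (t, true) := by
  refine ⟨by simp [Prod.Lex.lt_iff], fun y h₁ h₂ => ?_⟩
  obtain ⟨⟨s, c⟩, rfl⟩ := toLex.surjective y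
  cases c <;> simp [Prod.Lex.lt_iff] at h₁ h₂ <;> grind

theorem continuous_ofLex_fst : Continuous fun y : ℝ ×ₗ Bool => (ofLex y).1 := by
  refine continuous_iff_continuousAt.2 fun y => tendsto_order.2 ⟨fun a ha => ?_, fun b hb => ?_⟩
  · filter_upwards [lt_mem_nhds ((toLex_true_lt_iff a y).2 ha)] with z hz
    exact (toLex_true_lt_iff a z).1 hz
  · filter_upwards [gt_mem_nhds ((lt_toLex_false_iff b y).2 hb)] with z hz
    exact (lt_toLex_false_iff b z).1 hz

/-- In the split real line with the order topology, a sequence `xₙ` converges to `t+`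
iff the first coordinates converge to `t` in `ℝ` and `xₙ ≥ t+` eventually; and it
converges to `t−` iff the first coordinates converge to `t` and `xₙ ≤ t−` eventually. -/
theorem splitRealLine_tendsto_iff (x : ℕ → ℝ ×ₗ Bool) (t : ℝ) :
    (Tendsto x atTop (𝓝 (toLex (t, true))) ↔
      (Tendsto (fun n => (ofLex (x n)).1) atTop (𝓝 t) ∧
        ∀ᶠ n in atTop, toLex (t, true) ≤ x n)) ∧
    (Tendsto x atTop (𝓝 (toLex (t, false))) ↔
      (Tendsto (fun n => (ofLex (x n)).1) atTop (𝓝 t) ∧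
        ∀ᶠ n in atTop, x n ≤ toLex (t, false))) := by
  have hcov := toLex_false_covBy_true t
  constructor
  · constructor
    · intro h
      refine ⟨(continuous_ofLex_fst.tendsto _).comp h, ?_⟩
      filter_upwards [h.eventually (lt_mem_nhds hcov.lt)] with n hn
      exact hcov.ge_of_gt hn
    · rintro ⟨h, hx⟩
      refine tendsto_order.2 ⟨fun a ha => hx.mono fun n hn => ha.trans_le hn, fun b hb => ?_⟩
      filter_upwards [h.eventually (gt_mem_nhds ((toLex_true_lt_iff t b).1 hb))] with n hn
      exact Prod.Lex.lt_iff.2 (Or.inl hn)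
  · constructor
    · intro h
      refine ⟨(continuous_ofLex_fst.tendsto _).comp h, ?_⟩
      filter_upwards [h.eventually (gt_mem_nhds hcov.lt)] with n hn
      exact hcov.le_of_lt hn
    · rintro ⟨h, hx⟩
      refine tendsto_order.2 ⟨fun a ha => ?_, fun b hb => hx.mono fun n hn => hn.trans_lt hb⟩
      filter_upwards [h.eventually (lt_mem_nhds ((lt_toLex_false_iff t a).1 ha))] with n hn
      exact Prod.Lex.lt_iff.2 (Or.inl hn)
end

section
/- The split real line ℝₛ, with the order topology, is a Hausdorff topological space that is separable but not metrizable. -/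
theorem splitRealLine_separableSpace : TopologicalSpace.SeparableSpace (ℝ ×ₗ Bool) := by
  refine ⟨Set.range fun q : ℚ => toLex ((q : ℝ), true), Set.countable_range _, fun x => ?_⟩
  rw [mem_closure_iff_nhds]
  intro U hU
  obtain ⟨⟨t, b⟩, rfl⟩ := toLex.surjective x
  cases b
  · obtain ⟨l, hl, hlU⟩ := exists_Ioc_subset_of_mem_nhds hU
      ⟨toLex (t - 1, true), by simp [Prod.Lex.toLex_lt_toLex]⟩
    obtain ⟨⟨s, c⟩, rfl⟩ := toLex.surjective l
    -- Nothing lies below `−`, so the left endpoint has strictly smaller real part.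
    have hst : s < t := by
      rcases Prod.Lex.toLex_lt_toLex.1 hl with h | ⟨-, h⟩
      · exact h
      · exact absurd h (Bool.false_le _).not_gt
    obtain ⟨q, hsq, hqt⟩ := exists_rat_btwn hst
    exact ⟨_, hlU ⟨Prod.Lex.toLex_lt_toLex.2 (.inl hsq), Prod.Lex.toLex_le_toLex.2 (.inl hqt)⟩,
      q, rfl⟩
  · obtain ⟨u, hu, huU⟩ := exists_Ico_subset_of_mem_nhds hU
      ⟨toLex (t + 1, true), by simp [Prod.Lex.toLex_lt_toLex]⟩
    obtain ⟨⟨s, c⟩, rfl⟩ := toLex.surjective u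
    -- Nothing lies above `+`, so the right endpoint has strictly larger real part.
    have hts : t < s := by
      rcases Prod.Lex.toLex_lt_toLex.1 hu with h | ⟨-, h⟩
      · exact h
      · exact absurd h (Bool.le_true _).not_gt
    obtain ⟨q, htq, hqs⟩ := exists_rat_btwn hts
    exact ⟨_, huU ⟨Prod.Lex.toLex_le_toLex.2 (.inl htq), Prod.Lex.toLex_lt_toLex.2 (.inl hqs)⟩,
      q, rfl⟩

theorem splitRealLine_covBy (t : ℝ) : toLex (t, false) ⋖ toLex (t, true) :=
  Prod.Lex.toLex_covBy_toLex_iff.2 (.inl ⟨rfl, by simp⟩)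

theorem splitRealLine_not_secondCountable : ¬ SecondCountableTopology (ℝ ×ₗ Bool) := by
  intro _
  have hinj : Function.Injective fun t : ℝ => toLex (t, false) := fun a b h => by simpa using h
  have hc : (Set.univ : Set ℝ).Countable := by
    refine ((countable_setOfPred_covBy_right (α := ℝ ×ₗ Bool)).preimage hinj).mono fun t _ => ?_
    exact ⟨_, splitRealLine_covBy t⟩
  exact Cardinal.not_countable_real hc

/-- The split real line with the order topology is a Hausdorff topological space
that is separable but not metrizable. -/
theorem splitRealLine_t2_separable_not_metrizable :
    T2Space (ℝ ×ₗ Bool) ∧ TopologicalSpace.SeparableSpace (ℝ ×ₗ Bool) ∧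
      ¬ TopologicalSpace.MetrizableSpace (ℝ ×ₗ Bool) := by
  refine ⟨inferInstance, splitRealLine_separableSpace, fun _ => ?_⟩
  have := splitRealLine_separableSpace
  let _ := TopologicalSpace.metrizableSpaceMetric (ℝ ×ₗ Bool)
  exact splitRealLine_not_secondCountable (UniformSpace.secondCountable_of_separable _)
end

section
/- A subset C of the split real line ℝₛ (with the order topology) is compact if and only if C is closed and bounded, where bounded means that there exists T ∈ ℝ with |t| ≤ T for every (t,⋆) ∈ C (i.e. C ⊆ [(−T)−, T+]). -/
lemma splitReal_exists_isLUB (s : Set (ℝ ×ₗ Bool)) (hne : s.Nonempty) (hb : BddAbove s) :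
    ∃ x, IsLUB s x := by
  have hlub : IsLUB ((fun x : ℝ ×ₗ Bool => (ofLex x).1) '' s)
      (sSup ((fun x : ℝ ×ₗ Bool => (ofLex x).1) '' s)) :=
    isLUB_csSup (hne.image _) (Prod.Lex.monotone_fst_ofLex.map_bddAbove hb)
  generalize sSup ((fun x : ℝ ×ₗ Bool => (ofLex x).1) '' s) = t at hlub
  have hle : ∀ x ∈ s, (ofLex x).1 ≤ t := fun x hx => hlub.1 ⟨x, hx, rfl⟩
  by_cases ht : toLex (t, true) ∈ s
  · exact ⟨toLex (t, true), fun x hx => Prod.Lex.le_iff'.2 ⟨hle x hx, fun _ => le_top⟩,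
      fun y hy => hy ht⟩
  · refine ⟨toLex (t, false), fun x hx => Prod.Lex.le_iff'.2 ⟨hle x hx, fun h => ?_⟩,
      fun y hy => Prod.Lex.le_iff'.2 ⟨hlub.2 ?_, fun _ => bot_le⟩⟩
    · cases hx2 : (ofLex x).2 with
      | false => exact le_rfl
      | true =>
        have hxt : x = toLex (t, true) := ofLex.injective (Prod.ext h hx2)
        exact absurd (hxt ▸ hx) ht
    · rintro _ ⟨x, hx, rfl⟩
      exact Prod.Lex.monotone_fst_ofLex (hy hx)

lemma splitReal_exists_isGLB (s : Set (ℝ ×ₗ Bool)) (hne : s.Nonempty) (hb : BddBelow s) :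
    ∃ x, IsGLB s x := by
  obtain ⟨x, hx⟩ := splitReal_exists_isLUB (lowerBounds s) hb hne.bddAbove_lowerBounds
  exact ⟨x, isLUB_lowerBounds.1 hx⟩

open Classical in
/-- The conditionally complete structure on the split real line extending its lexicographic linear
order. Suprema and infima are obtained by choice, with junk value `0−` for sets that are empty or
unbounded on the relevant side. -/
@[reducible]
noncomputable def splitRealConditionallyComplete :
    ConditionallyCompleteLinearOrder (ℝ ×ₗ Bool) where
  __ := Prod.Lex.instLinearOrder ℝ Bool
  __ := LinearOrder.toLattice (α := ℝ ×ₗ Bool)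
  sSup s := if h : s.Nonempty ∧ BddAbove s then (splitReal_exists_isLUB s h.1 h.2).choose
    else toLex (0, false)
  sInf s := if h : s.Nonempty ∧ BddBelow s then (splitReal_exists_isGLB s h.1 h.2).choose
    else toLex (0, false)
  isLUB_csSup s h₁ h₂ := by
    rw [dif_pos ⟨h₁, h₂⟩]
    exact (splitReal_exists_isLUB s h₁ h₂).choose_spec
  isGLB_csInf s h₁ h₂ := by
    rw [dif_pos ⟨h₁, h₂⟩]
    exact (splitReal_exists_isGLB s h₁ h₂).choose_spec
  csSup_of_not_bddAbove s h := by
    rw [dif_neg fun h' => h h'.2, dif_neg fun h' => Set.not_nonempty_empty h'.1]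
  csInf_of_not_bddBelow s h := by
    rw [dif_neg fun h' => h h'.2, dif_neg fun h' => Set.not_nonempty_empty h'.1]

lemma splitReal_isCompact_Icc (a b : ℝ ×ₗ Bool) : IsCompact (Set.Icc a b) :=
  @ConditionallyCompleteLinearOrder.isCompact_Icc _ splitRealConditionallyComplete _
    inferInstance a b

/-- A subset of the split real line (with the order topology) is compact if and only
if it is closed and bounded, where bounded means that there exists `T ∈ ℝ` with
`|t| ≤ T` for every `(t,⋆)` in the set. -/
theorem splitRealLine_isCompact_iff_isClosed_bounded (C : Set (ℝ ×ₗ Bool)) :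
    IsCompact C ↔ IsClosed C ∧ ∃ T : ℝ, ∀ x ∈ C, |(ofLex x).1| ≤ T := by
  constructor
  · intro hC
    refine ⟨hC.isClosed, ?_⟩
    obtain ⟨a, ha⟩ := hC.bddBelow
    obtain ⟨b, hb⟩ := hC.bddAbove
    refine ⟨max |(ofLex a).1| |(ofLex b).1|, fun x hx => ?_⟩
    exact abs_le_max_abs_abs (Prod.Lex.monotone_fst_ofLex (ha hx))
      (Prod.Lex.monotone_fst_ofLex (hb hx))
  · rintro ⟨hC, T, hT⟩
    refine (splitReal_isCompact_Icc (toLex (-T, false)) (toLex (T, true))).of_isClosed_subset hC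
      fun x hx => ?_
    have h := abs_le.1 (hT x hx)
    exact ⟨Prod.Lex.le_iff'.2 ⟨h.1, fun _ => bot_le⟩, Prod.Lex.le_iff'.2 ⟨h.2, fun _ => le_top⟩⟩
end

section
/- A subset C of the split real line ℝₛ (with the order topology) is compact if and only if C is sequentially compact (every sequence in C has a subsequence converging to a point of C). -/
open Filter Topology Set

section General

variable {X : Type*} [LinearOrder X] [TopologicalSpace X] [OrderTopology X]

theorem tendsto_of_monotone_of_mapClusterPt {u : ℕ → X} (hu : Monotone u) {a : X}
    (ha : MapClusterPt a atTop u) : Tendsto u atTop (𝓝 a) := by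
  refine tendsto_atTop_isLUB hu ⟨?_, ?_⟩
  · rintro _ ⟨n, rfl⟩
    by_contra! h
    obtain ⟨m, hm, hnm⟩ := ((ha.frequently (Iio_mem_nhds h)).and_eventually
      (eventually_ge_atTop n)).exists
    exact (hu hnm).not_gt hm
  · intro b hb
    by_contra! h
    obtain ⟨m, hm⟩ := (ha.frequently (Ioi_mem_nhds h)).exists
    exact (hb (mem_range_self m)).not_gt hm

theorem IsCompact.isSeqCompact_of_linearOrder {C : Set X} (hC : IsCompact C) :
    IsSeqCompact C := by
  intro u hu
  obtain ⟨g, hg⟩ := exists_increasing_or_nonincreasing_subseq (· ≤ ·) u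
  obtain ⟨a, haC, ha⟩ := hC.exists_mapClusterPt (f := atTop) (u := u ∘ g)
    (tendsto_principal.2 (Eventually.of_forall fun n => hu (g n)))
  refine ⟨a, haC, g, g.strictMono, ?_⟩
  rcases hg with hg | hg
  · exact tendsto_of_monotone_of_mapClusterPt (monotone_nat_of_le_succ fun n =>
      hg n (n + 1) n.lt_succ_self) ha
  · exact tendsto_of_monotone_of_mapClusterPt (X := Xᵒᵈ) (u := u ∘ g)
      (monotone_nat_of_le_succ fun n => (not_le.1 (hg n (n + 1) n.lt_succ_self)).le) ha

end General

/-- A sequentially compact set in a Hausdorff space contains the limit of every countably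
generated proper filter on it. -/
theorem IsSeqCompact.mem_of_le_nhds {X : Type*} [TopologicalSpace X] [T2Space X] {C : Set X}
    (hC : IsSeqCompact C) {G : Filter X} [G.NeBot] [G.IsCountablyGenerated]
    (hGC : G ≤ 𝓟 C) {a : X} (ha : G ≤ 𝓝 a) : a ∈ C := by
  obtain ⟨u, hu⟩ := exists_seq_tendsto G
  obtain ⟨b, hb, φ, hφ, hlim⟩ := hC.subseq_of_frequently_in
    (tendsto_principal.1 (hu.mono_right hGC)).frequently
  rwa [tendsto_nhds_unique ((hu.mono_right ha).comp hφ.tendsto_atTop) hlim]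

theorem splitRealLine_continuous_fst : Continuous fun p : ℝ ×ₗ Bool => (ofLex p).1 :=
  Monotone.continuous_of_surjective (fun _ _ h => Prod.Lex.monotone_fst_ofLex h)
    fun t => ⟨toLex (t, false), rfl⟩

theorem comap_fst_inf_Iic_le (t : ℝ) :
    comap (fun p : ℝ ×ₗ Bool => (ofLex p).1) (𝓝 t) ⊓ 𝓟 (Iic (toLex (t, false))) ≤
      𝓝 (toLex (t, false)) := by
  refine tendsto_id'.1 (tendsto_order.2 ⟨fun a ha => ?_, fun a ha => ?_⟩)
  · have h : (ofLex a).1 < t := by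
      rcases Prod.Lex.lt_iff.1 ha with h | h
      · exact h
      · exact absurd h.2 (Bool.false_le _).not_gt
    filter_upwards [mem_inf_of_left (preimage_mem_comap (Ioi_mem_nhds h))] with p hp
    exact Prod.Lex.lt_iff.2 (Or.inl hp)
  · filter_upwards [mem_inf_of_right (mem_principal_self _)] with p hp
    exact lt_of_le_of_lt hp ha

theorem comap_fst_inf_Ici_le (t : ℝ) :
    comap (fun p : ℝ ×ₗ Bool => (ofLex p).1) (𝓝 t) ⊓ 𝓟 (Ici (toLex (t, true))) ≤
      𝓝 (toLex (t, true)) := by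
  refine tendsto_id'.1 (tendsto_order.2 ⟨fun a ha => ?_, fun a ha => ?_⟩)
  · filter_upwards [mem_inf_of_right (mem_principal_self _)] with p hp
    exact lt_of_lt_of_le ha hp
  · have h : t < (ofLex a).1 := by
      rcases Prod.Lex.lt_iff.1 ha with h | h
      · exact h
      · exact absurd h.2 (Bool.le_true _).not_gt
    filter_upwards [mem_inf_of_left (preimage_mem_comap (Iio_mem_nhds h))] with p hp
    exact Prod.Lex.lt_iff.2 (Or.inl hp)

theorem Iic_union_Ici_splitRealLine (t : ℝ) :
    Iic (toLex (t, false)) ∪ Ici (toLex (t, true)) = (univ : Set (ℝ ×ₗ Bool)) := by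
  refine eq_univ_of_forall fun p => ?_
  rcases lt_trichotomy (ofLex p).1 t with h | h | h
  · exact Or.inl (Prod.Lex.le_iff.2 (Or.inl h))
  · cases hb : (ofLex p).2
    · exact Or.inl (Prod.Lex.le_iff.2 (Or.inr ⟨h, hb.le⟩))
    · exact Or.inr (Prod.Lex.le_iff.2 (Or.inr ⟨h.symm, hb.ge⟩))
  · exact Or.inr (Prod.Lex.le_iff.2 (Or.inl h))

theorem IsSeqCompact.isCompact_splitRealLine {C : Set (ℝ ×ₗ Bool)} (hC : IsSeqCompact C) :
    IsCompact C := by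
  have hK : IsCompact ((fun p : ℝ ×ₗ Bool => (ofLex p).1) '' C) :=
    (hC.image splitRealLine_continuous_fst.seqContinuous).isCompact
  refine isCompact_iff_ultrafilter_le_nhds.2 fun F hF => ?_
  obtain ⟨t, -, ht⟩ := isCompact_iff_ultrafilter_le_nhds.1 hK
    (F.map fun p : ℝ ×ₗ Bool => (ofLex p).1)
    (le_principal_iff.2 (image_mem_map (le_principal_iff.1 hF)))
  have hFt : (F : Filter (ℝ ×ₗ Bool)) ≤ comap (fun p => (ofLex p).1) (𝓝 t) :=
    map_le_iff_le_comap.1 ht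
  -- Both sides of `t` are handled alike: `S` is the side on which `F` lives, `a` its endpoint.
  have key : ∀ (S : Set (ℝ ×ₗ Bool)) (a : ℝ ×ₗ Bool), S ∈ F →
      comap (fun p : ℝ ×ₗ Bool => (ofLex p).1) (𝓝 t) ⊓ 𝓟 S ≤ 𝓝 a →
      ∃ x ∈ C, (F : Filter (ℝ ×ₗ Bool)) ≤ 𝓝 x := by
    intro S a hS ha
    have hFS := le_inf hFt (le_principal_iff.2 hS)
    have : (comap (fun p : ℝ ×ₗ Bool => (ofLex p).1) (𝓝 t) ⊓ 𝓟 S ⊓ 𝓟 C).NeBot :=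
      neBot_of_le (le_inf hFS hF)
    exact ⟨a, hC.mem_of_le_nhds inf_le_right (inf_le_left.trans ha), hFS.trans ha⟩
  have hcover : Iic (toLex (t, false)) ∪ Ici (toLex (t, true)) ∈ F := by
    rw [Iic_union_Ici_splitRealLine]
    exact univ_mem
  rcases Ultrafilter.union_mem_iff.1 hcover with h | h
  · exact key _ _ h (comap_fst_inf_Iic_le t)
  · exact key _ _ h (comap_fst_inf_Ici_le t)

/-- A subset of the split real line (with the order topology) is compact if and only
if it is sequentially compact. -/
theorem splitRealLine_isCompact_iff_isSeqCompact (C : Set (ℝ ×ₗ Bool)) :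
    IsCompact C ↔ IsSeqCompact C := by
  exact ⟨fun h => h.isSeqCompact_of_linearOrder, fun h => h.isCompact_splitRealLine⟩
end

section
/- Let f : ℝ → ℝ be a càdlàg function, i.e. f is right-continuous at every point and has a (finite) left limit f(t−) at every point t. Then the interpolated graph H(f) = {(t, x) ∈ ℝ × ℝ : x lies in the closed interval between f(t−) and f(t)} has two-dimensional Lebesgue measure zero. -/
/-!
The discontinuities of a càdlàg function `f` are exactly its jumps, the points `t` with
`f(t−) ≠ f(t)`. The jump size `f(s−) - f(s)` tends to `0` as `s ↑ t`, because `s ↦ f(s−)` and `f`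
have the same left limit at `t`. Hence for each `ε > 0` every point of the set of jumps larger
than `ε` is isolated on the left in that set, so the set is countable, and `f` has countably many jumps
(`countable_jumps`). In particular `f` is Borel measurable. Away from the jumps the interpolated
graph coincides with the graph of `f`, which is null by Fubini; the remaining part lies in
`D × ℝ` with `D` countable, which is null as well.
-/

open Filter Topology MeasureTheory

theorem countable_jumps (f : ℝ → ℝ)
    (hleft : ∀ t : ℝ, Tendsto f (𝓝[<] t) (𝓝 (Function.leftLim f t))) :
    {t : ℝ | Function.leftLim f t ≠ f t}.Countable := by
  have hjump (t : ℝ) :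
      Tendsto (fun s => |Function.leftLim f s - f s|) (𝓝[<] t) (𝓝 0) := by
    have h1 : Tendsto (Function.leftLim f) (𝓝[<] t) (𝓝 (Function.leftLim f t)) :=
      (continuousWithinAt_leftLim_Iic (hleft t)).tendsto.mono_left
        (nhdsWithin_mono t Set.Iio_subset_Iic_self)
    simpa using (h1.sub (hleft t)).abs
  have hlarge (n : ℕ) :
      {t : ℝ | 1 / ((n : ℝ) + 1) < |Function.leftLim f t - f t|}.Countable := by
    refine (countable_setOfPred_isolated_left_within
      (s := {t : ℝ | 1 / ((n : ℝ) + 1) < |Function.leftLim f t - f t|})).mono ?_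
    intro t ht
    refine ⟨ht, ?_⟩
    have hsmall := (hjump t).eventually_lt_const (Nat.one_div_pos_of_nat (α := ℝ) (n := n))
    rw [← empty_mem_iff_bot, Set.inter_comm, nhdsWithin_inter']
    filter_upwards [hsmall.filter_mono inf_le_left, mem_inf_of_right (mem_principal_self _)]
      with s hs hs'
    exact lt_asymm hs hs'
  refine (Set.countable_iUnion hlarge).mono fun t ht => ?_
  obtain ⟨n, hn⟩ := exists_nat_one_div_lt (abs_pos.2 (sub_ne_zero.2 ht))
  exact Set.mem_iUnion.2 ⟨n, hn⟩

theorem volume_graph_eq_zero {f : ℝ → ℝ} (hf : Measurable f) :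
    volume {p : ℝ × ℝ | p.2 = f p.1} = 0 := by
  have hmeas : MeasurableSet {p : ℝ × ℝ | p.2 = f p.1} :=
    measurableSet_eq_fun measurable_snd (hf.comp measurable_fst)
  rw [Measure.volume_eq_prod, Measure.measure_prod_null hmeas]
  refine Eventually.of_forall fun t => ?_
  have : Prod.mk t ⁻¹' {p : ℝ × ℝ | p.2 = f p.1} = {f t} := by
    ext x
    simp
  simp [this]

/-- For a càdlàg function `f : ℝ → ℝ` (right-continuous with finite left limits
`f(t−) = Function.leftLim f t` at every point), the interpolated graph
`H(f) = {(t, x) : x ∈ [f(t−), f(t)]}` has two-dimensional Lebesgue measure zero. -/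
theorem interpolatedGraph_measure_zero (f : ℝ → ℝ)
    (hright : ∀ t : ℝ, Tendsto f (𝓝[>] t) (𝓝 (f t)))
    (hleft : ∀ t : ℝ, Tendsto f (𝓝[<] t) (𝓝 (Function.leftLim f t))) :
    volume {p : ℝ × ℝ | p.2 ∈ Set.uIcc (Function.leftLim f p.1) (f p.1)} = 0 := by
  have hD := countable_jumps f hleft
  have hf : Measurable f := by
    refine measurable_of_countable_not_continuousAt (hD.mono ?_)
    intro t ht heq
    apply ht
    have hl := hleft t
    rw [heq] at hl
    exact continuousAt_iff_continuous_left'_right'.2 ⟨hl, hright t⟩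
  have hnull : volume ({t : ℝ | Function.leftLim f t ≠ f t} ×ˢ (Set.univ : Set ℝ)) = 0 := by
    rw [Measure.volume_eq_prod, Measure.prod_prod, hD.measure_zero volume, zero_mul]
  refine measure_mono_null (fun p hp => ?_) (measure_union_null (volume_graph_eq_zero hf) hnull)
  by_cases h : Function.leftLim f p.1 = f p.1
  · left
    simpa [h] using hp
  · exact Or.inr ⟨h, Set.mem_univ _⟩
end

section
/- Let (M, d) be a metric space and let 𝒞 ⊆ 𝒦(M) be a closed set of nonempty compact subsets of M. Then the set {A ∈ 𝒦(M) : there exists C ∈ 𝒞 with C ⊆ A} is a closed subset of 𝒦(M). -/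
open TopologicalSpace

/-!
The argument rests on the compactness of `𝒮 = {L ∈ 𝒦(M) : L ⊆ A}` for compact `A`. If no member
of the closed family `𝒞` is contained in `A`, then `𝒮` is disjoint from `𝒞`, so some
`δ`-thickening of `𝒮` still misses `𝒞`. When `dist A B < δ`, every nonempty compact `C ⊆ B` lies
within distance `dist A B` of a member of `𝒮` (`exists_subset_dist_le`), hence is not in `𝒞`.
So the complement of the set in question is open.
-/

/-- Compact subsets of `B` can be moved into `A` at Hausdorff cost at most `dist A B`. The witness
consists of the points of `A` at distance at most `dist A B` from `C`. -/
theorem exists_subset_dist_le {M : Type*} [MetricSpace M] (A B C : NonemptyCompacts M)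
    (hCB : (C : Set M) ⊆ (B : Set M)) :
    ∃ L : NonemptyCompacts M, (L : Set M) ⊆ (A : Set M) ∧ dist C L ≤ dist A B := by
  have near : ∀ c ∈ (C : Set M), ∃ a ∈ (A : Set M), dist c a ≤ dist A B := by
    intro c hc
    obtain ⟨a, ha, hca⟩ := A.isCompact.exists_infDist_eq_dist A.nonempty c
    refine ⟨a, ha, ?_⟩
    rw [← hca, dist_comm A B, Metric.NonemptyCompacts.dist_eq]
    exact Metric.infDist_le_hausdorffDist_of_mem (hCB hc)
      (Metric.hausdorffEDist_ne_top_of_nonempty_of_bounded B.nonempty A.nonempty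
        B.isCompact.isBounded A.isCompact.isBounded)
  let S : Set M := (A : Set M) ∩ {a | Metric.infDist a (C : Set M) ≤ dist A B}
  have hS : ∀ c ∈ (C : Set M), ∃ a ∈ S, dist c a ≤ dist A B := by
    intro c hc
    obtain ⟨a, ha, hca⟩ := near c hc
    exact ⟨a, ⟨ha, (Metric.infDist_le_dist_of_mem hc).trans (dist_comm c a ▸ hca)⟩, hca⟩
  have hSc : IsCompact S :=
    A.isCompact.inter_right (isClosed_le (Metric.continuous_infDist_pt _) continuous_const)
  have hSn : S.Nonempty := by
    obtain ⟨c, hc⟩ := C.nonempty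
    obtain ⟨a, ha, -⟩ := hS c hc
    exact ⟨a, ha⟩
  refine ⟨⟨⟨S, hSc⟩, hSn⟩, Set.inter_subset_left, ?_⟩
  rw [Metric.NonemptyCompacts.dist_eq]
  refine Metric.hausdorffDist_le_of_mem_dist dist_nonneg hS ?_
  rintro a ⟨-, ha⟩
  obtain ⟨c, hc, hac⟩ := C.isCompact.exists_infDist_eq_dist C.nonempty a
  exact ⟨c, hc, hac ▸ ha⟩

/-- For a metric space `M` and a closed family `𝒞` of nonempty compact subsets of `M`,
the set `{A ∈ 𝒦(M) : ∃ C ∈ 𝒞, C ⊆ A}` is closed in the hyperspace `𝒦(M)` of nonempty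
compact subsets of `M` with the Hausdorff metric. -/
theorem isClosed_contains_member_of_closed_family {M : Type*} [MetricSpace M]
    {𝒞 : Set (NonemptyCompacts M)} (h𝒞 : IsClosed 𝒞) :
    IsClosed {A : NonemptyCompacts M | ∃ C ∈ 𝒞, (C : Set M) ⊆ (A : Set M)} := by
  rw [← isOpen_compl_iff, Metric.isOpen_iff]
  intro A hA
  have hK : IsCompact {L : NonemptyCompacts M | (L : Set M) ⊆ (A : Set M)} :=
    NonemptyCompacts.isCompact_subsets_of_isCompact A.isCompact
  obtain ⟨δ, hδ, hsub⟩ := hK.exists_thickening_subset_open h𝒞.isOpen_compl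
    (fun L hL hLC => hA ⟨L, hLC, hL⟩)
  refine ⟨δ, hδ, ?_⟩
  rintro B hB ⟨C, hC, hCB⟩
  obtain ⟨L, hLA, hL⟩ := exists_subset_dist_le A B C hCB
  refine hsub (Metric.mem_thickening_iff.2 ⟨L, hLA, hL.trans_lt ?_⟩) hC
  rw [dist_comm]
  exact hB
end
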